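/- Jacobian identity for T in the canonical form (Step 2 of the proof of Proposition 5). Consider the canonical form, let θ = (θ_a, θ_b) ∈ R^{2n}, w ∈ R^r, and let λ_1, …, λ_r be nonzero reals, none of which is an eigenvalue of A(θ_a). Then the Jacobian of (x, θ) ↦ T(x, θ, w) satisfies Diag{1 − V_{λ_1}^T θ_a, …, 1 − V_{λ_r}^T θ_a} · (∂T/∂(x,θ))(x, θ, w) = P(T(x,θ,w), w), where the diagonal entries 1 − V_{λ_i}^T θ_a are all nonzero. In particular, if for some L_T > 0 the uniform lower bound |T(x,θ,w) − T(x*,θ*,w)| ≥ L_T |(x−x*, θ−θ*)| holds on a neighborhood of (x,θ), then the r×3n matrix P(T(x,θ,w), w) has full column rank 3n. -/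

import Mathlib

open scoped Matrix BigOperators

/-- The Euclidean norm of a vector in `ℝ^m`. -/
noncomputable def eNorm {m : ℕ} (x : Fin m → ℝ) : ℝ := Real.sqrt (∑ i, (x i) ^ 2)

/-- The first basis row vector `e₁ᵀ = (1, 0, …, 0)`. -/
def e1 (n : ℕ) : Fin n → ℝ := fun j => if (j : ℕ) = 0 then 1 else 0

/-- Canonical SISO form : `A(θ_a)` has first column `−θ_a` and entries `(i, i+1)` equal
to `1`, all other entries `0`. -/
def Acan (n : ℕ) (θa : Fin n → ℝ) : Matrix (Fin n) (Fin n) ℝ :=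
  fun i j => if (j : ℕ) = 0 then -θa i else if (j : ℕ) = (i : ℕ) + 1 then 1 else 0

/-- `V_λ = −(1/λ, 1/λ², …, 1/λ^n)ᵀ`. -/
noncomputable def Vlam (n : ℕ) (lam : ℝ) : Fin n → ℝ :=
  fun i => -(1 / lam ^ ((i : ℕ) + 1))

/-- The Luenberger map for the canonical form. -/
noncomputable def Tcan (n r : ℕ) (lam : Fin r → ℝ) (x θa θb : Fin n → ℝ)
    (w : Fin r → ℝ) : Fin r → ℝ :=
  fun i => Matrix.vecMul (e1 n) (Acan n θa - lam i • (1 : Matrix (Fin n) (Fin n) ℝ))⁻¹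
    ⬝ᵥ (x - w i • θb)

/-- The `r × 3n` matrix `P(z,w)` with rows `Pᵢ = [V_{λᵢ}ᵀ, zᵢ V_{λᵢ}ᵀ, −wᵢ V_{λᵢ}ᵀ]`. -/
noncomputable def Pmat (n r : ℕ) (lam : Fin r → ℝ) (z w : Fin r → ℝ) :
    Matrix (Fin r) (Fin (3 * n)) ℝ :=
  fun i j =>
    if h : (j : ℕ) < n then Vlam n (lam i) ⟨(j : ℕ), h⟩
    else if h2 : (j : ℕ) < 2 * n then z i * Vlam n (lam i) ⟨(j : ℕ) - n, by omega⟩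
    else -(w i) * Vlam n (lam i) ⟨(j : ℕ) - 2 * n, by have := j.2; omega⟩

/-- The concatenation `(x, θ_a, θ_b) ∈ ℝ^{3n}`. -/
def stack3 (n : ℕ) (x θa θb : Fin n → ℝ) : Fin (3 * n) → ℝ :=
  fun j =>
    if h : (j : ℕ) < n then x ⟨(j : ℕ), h⟩
    else if h2 : (j : ℕ) < 2 * n then θa ⟨(j : ℕ) - n, by omega⟩
    else θb ⟨(j : ℕ) - 2 * n, by have := j.2; omega⟩

/-!
For `λ ≠ 0`, the row `V_λᵀ` satisfies `V_λᵀ (A(θ_a) - λ I) = (1 - V_λᵀ θ_a) e₁ᵀ`. Hence, when `λ`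
is not an eigenvalue, `1 - V_λᵀ θ_a ≠ 0` and
`T_i(x, θ, w_i) = V_{λ_i}ᵀ (x - w_i θ_b) / (1 - V_{λ_i}ᵀ θ_a)`: numerator and denominator are
affine in `(x, θ)`, and the quotient rule gives the Jacobian. A local lower Lipschitz bound on `T`
passes to difference quotients, so the Jacobian, and with it `P`, has trivial kernel.
-/

open Filter Topology

section Calculus

variable {𝕜 E F : Type*} [NontriviallyNormedField 𝕜]

theorem hasFDerivAt_fun_div [NormedAddCommGroup E] [NormedSpace 𝕜 E] {f g : E → 𝕜}
    {f' g' : E →L[𝕜] 𝕜} {x : E} (hf : HasFDerivAt f f' x) (hg : HasFDerivAt g g' x)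
    (hx : g x ≠ 0) :
    HasFDerivAt (fun y => f y / g y) ((g x)⁻¹ • (f' - (f x / g x) • g')) x := by
  have hinv : HasFDerivAt (fun y => (g y)⁻¹) (-(g x ^ 2)⁻¹ • g') x :=
    (hasDerivAt_inv hx).comp_hasFDerivAt x hg
  simp only [div_eq_mul_inv]
  refine (hf.fun_mul hinv).congr_fderiv ?_
  ext v
  simp only [add_apply, sub_apply, smul_apply, smul_eq_mul]
  field_simp
  ring

theorem seminorm_le_of_hasLineDerivAt [AddCommGroup E] [Module 𝕜 E] [TopologicalSpace E]
    [ContinuousAdd E] [ContinuousSMul 𝕜 E] [NormedAddCommGroup F] [NormedSpace 𝕜 F]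
    {p : Seminorm 𝕜 E} {q : Seminorm 𝕜 F} (hq : Continuous q) {f : E → F} {f' : F} {x v : E}
    {c : ℝ} (hf : HasLineDerivAt 𝕜 f f' x v)
    (h : ∀ᶠ y in 𝓝 x, c * p (y - x) ≤ q (f y - f x)) :
    c * p v ≤ q f' := by
  have hline : Tendsto (fun t : 𝕜 => x + t • v) (𝓝[≠] 0) (𝓝 x) := by
    have hcont : Continuous fun t : 𝕜 => x + t • v := by fun_prop
    simpa using (hcont.tendsto 0).mono_left nhdsWithin_le_nhds
  have hslope := (hq.tendsto f').comp (hasLineDerivAt_iff_tendsto_slope_zero.1 hf)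
  refine ge_of_tendsto hslope ?_
  filter_upwards [hline.eventually h, self_mem_nhdsWithin] with t ht (ht0 : t ≠ 0)
  rw [add_sub_cancel_left, map_smul_eq_mul] at ht
  rw [Function.comp_apply, map_smul_eq_mul, norm_inv, le_inv_mul_iff₀ (norm_pos_iff.2 ht0)]
  linarith

end Calculus

/-- The Euclidean norm `eNorm` of `ℝ^m` as a seminorm on `Fin m → ℝ`, whose own norm is the
sup norm. -/
noncomputable def eNormSeminorm (m : ℕ) : Seminorm ℝ (Fin m → ℝ) :=
  (normSeminorm ℝ (EuclideanSpace ℝ (Fin m))).comp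
    (WithLp.linearEquiv 2 ℝ (Fin m → ℝ)).symm.toLinearMap

theorem eNormSeminorm_apply {m : ℕ} (v : Fin m → ℝ) : eNormSeminorm m v = eNorm v := by
  simp [eNormSeminorm, eNorm, EuclideanSpace.norm_eq]

theorem continuous_eNorm {m : ℕ} : Continuous (eNorm : (Fin m → ℝ) → ℝ) := by
  unfold eNorm
  fun_prop

theorem eNorm_eq_zero {m : ℕ} {v : Fin m → ℝ} : eNorm v = 0 ↔ v = 0 := by
  simp [← eNormSeminorm_apply, eNormSeminorm]

section Stack

/-- The space of triples `(x, θ_a, θ_b)`. -/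
abbrev ParamState (n : ℕ) : Type := (Fin n → ℝ) × (Fin n → ℝ) × (Fin n → ℝ)

variable {n : ℕ}

theorem stack3_eq_append (a b c : Fin n → ℝ) :
    stack3 n a b c = Fin.append (Fin.append a b) c ∘ Fin.cast (by ring) := by
  funext j
  simp only [stack3, two_mul, Fin.append, Fin.addCases, Function.comp_apply, eq_rec_constant,
    Fin.val_cast, Fin.val_castLT]
  split_ifs <;> first | rfl | omega

theorem stack3_dotProduct_stack3 (a b c a' b' c' : Fin n → ℝ) :
    stack3 n a b c ⬝ᵥ stack3 n a' b' c' = a ⬝ᵥ a' + b ⬝ᵥ b' + c ⬝ᵥ c' := by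
  have hn : n + n + n = 3 * n := by ring
  simp only [dotProduct, stack3_eq_append, ← (finCongr hn).sum_comp, Fin.sum_univ_add,
    finCongr_apply, Function.comp_apply, Fin.cast_cast, Fin.cast_eq_self, Fin.append_left,
    Fin.append_right]

theorem exists_eq_stack3 (u : Fin (3 * n) → ℝ) : ∃ a b c, u = stack3 n a b c := by
  refine ⟨fun k => u ⟨k, by omega⟩, fun k => u ⟨n + k, by omega⟩,
    fun k => u ⟨2 * n + k, by omega⟩, ?_⟩
  funext j
  unfold stack3
  grind

/-- The concatenation `stack3` as a linear map on triples. -/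
def stack3LinearMap (n : ℕ) : ParamState n →ₗ[ℝ] (Fin (3 * n) → ℝ) where
  toFun p := stack3 n p.1 p.2.1 p.2.2
  map_add' p p' := by
    funext j
    simp only [stack3, Pi.add_apply, Prod.fst_add, Prod.snd_add]
    split_ifs <;> rfl
  map_smul' t p := by
    funext j
    simp only [stack3, Pi.smul_apply, Prod.smul_fst, Prod.smul_snd, RingHom.id_apply]
    split_ifs <;> rfl

/-- The `i`-th row of `P(z, w)` as a linear form on increments of `(x, θ_a, θ_b)`. -/
noncomputable def PmatRow (n r : ℕ) (lam z w : Fin r → ℝ) (i : Fin r) : ParamState n →L[ℝ] ℝ :=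
  (dotProductBilin ℝ ℝ (Pmat n r lam z w i) ∘ₗ stack3LinearMap n).toContinuousLinearMap

theorem Pmat_row_eq_stack3 {r : ℕ} (lam z w : Fin r → ℝ) (i : Fin r) :
    Pmat n r lam z w i =
      stack3 n (Vlam n (lam i)) (z i • Vlam n (lam i)) (-w i • Vlam n (lam i)) :=
  rfl

theorem Pmat_mulVec_stack3 {r : ℕ} (lam z w : Fin r → ℝ) (a b c : Fin n → ℝ) (i : Fin r) :
    (Pmat n r lam z w *ᵥ stack3 n a b c) i =
      Vlam n (lam i) ⬝ᵥ (a - w i • c) + z i * (Vlam n (lam i) ⬝ᵥ b) := by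
  rw [Matrix.mulVec, Pmat_row_eq_stack3, stack3_dotProduct_stack3]
  simp only [smul_dotProduct, dotProduct_sub, dotProduct_smul, smul_eq_mul]
  ring

end Stack

section Resolvent

variable {n : ℕ} {l : ℝ}

theorem vecMul_Acan_zero (v θa : Fin (n + 1) → ℝ) :
    (v ᵥ* Acan (n + 1) θa) 0 = -(v ⬝ᵥ θa) := by
  simp [Matrix.vecMul, dotProduct, Acan]

theorem vecMul_Acan_succ (v θa : Fin (n + 1) → ℝ) (j : Fin n) :
    (v ᵥ* Acan (n + 1) θa) j.succ = v j.castSucc := by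
  have hentry (k : Fin (n + 1)) : Acan (n + 1) θa k j.succ = if k = j.castSucc then 1 else 0 := by
    simp [Acan, Fin.ext_iff, eq_comm]
  simp [Matrix.vecMul, dotProduct, hentry]

theorem mul_Vlam_zero (hl : l ≠ 0) : l * Vlam (n + 1) l 0 = -1 := by
  simp [Vlam, hl]

theorem mul_Vlam_succ (hl : l ≠ 0) (j : Fin n) :
    l * Vlam (n + 1) l j.succ = Vlam (n + 1) l j.castSucc := by
  simp only [Vlam, Fin.val_succ, Fin.val_castSucc, pow_succ _ (_ + 1)]
  field_simp

theorem Vlam_vecMul_Acan_sub_smul_one (θa : Fin n → ℝ) (hl : l ≠ 0) :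
    Vlam n l ᵥ* (Acan n θa - l • (1 : Matrix (Fin n) (Fin n) ℝ)) =
      (1 - Vlam n l ⬝ᵥ θa) • e1 n := by
  rw [Matrix.vecMul_sub, Matrix.vecMul_smul, Matrix.vecMul_one]
  cases n with
  | zero => exact Subsingleton.elim _ _
  | succ n =>
    funext j
    cases j using Fin.cases with
    | zero =>
      simp only [Pi.sub_apply, Pi.smul_apply, smul_eq_mul, vecMul_Acan_zero, mul_Vlam_zero hl, e1,
        Fin.val_zero, if_true]
      ring
    | succ j => simp [vecMul_Acan_succ, mul_Vlam_succ hl, e1]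

variable {θa : Fin n → ℝ}

theorem Vlam_eq_smul_e1_vecMul_inv (hl : l ≠ 0)
    (h : IsUnit (Acan n θa - l • (1 : Matrix (Fin n) (Fin n) ℝ)).det) :
    Vlam n l = (1 - Vlam n l ⬝ᵥ θa) •
      (e1 n ᵥ* (Acan n θa - l • (1 : Matrix (Fin n) (Fin n) ℝ))⁻¹) := by
  rw [← Matrix.smul_vecMul, ← Vlam_vecMul_Acan_sub_smul_one θa hl, Matrix.vecMul_vecMul,
    Matrix.mul_nonsing_inv _ h, Matrix.vecMul_one]

theorem one_sub_Vlam_dotProduct_ne_zero (hl : l ≠ 0)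
    (h : IsUnit (Acan n θa - l • (1 : Matrix (Fin n) (Fin n) ℝ)).det) :
    1 - Vlam n l ⬝ᵥ θa ≠ 0 := by
  intro h0
  have hV : Vlam n l = 0 := by rw [Vlam_eq_smul_e1_vecMul_inv hl h, h0, zero_smul]
  simp [hV] at h0

theorem continuous_Acan : Continuous (Acan n) := by
  refine continuous_matrix fun i j => ?_
  unfold Acan
  split_ifs <;> fun_prop

theorem eventually_isUnit_det_Acan_sub_smul_one
    (h : IsUnit (Acan n θa - l • (1 : Matrix (Fin n) (Fin n) ℝ)).det) :
    ∀ᶠ θ in 𝓝 θa, IsUnit (Acan n θ - l • (1 : Matrix (Fin n) (Fin n) ℝ)).det := by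
  have hdet : Continuous fun θ => (Acan n θ - l • (1 : Matrix (Fin n) (Fin n) ℝ)).det :=
    (continuous_Acan.sub continuous_const).matrix_det
  simp only [isUnit_iff_ne_zero] at h ⊢
  exact hdet.continuousAt.eventually_ne h

end Resolvent

section LuenbergerMap

/-- The Luenberger map `Tcan` at a fixed input `w`, as a function of the triple
`(x, θ_a, θ_b)`. -/
noncomputable def luenbergerMap (n r : ℕ) (lam w : Fin r → ℝ) (p : ParamState n) : Fin r → ℝ :=
  Tcan n r lam p.1 p.2.1 p.2.2 w

variable {n r : ℕ} {θa : Fin n → ℝ} {lam : Fin r → ℝ} (θb x : Fin n → ℝ) (w : Fin r → ℝ)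

theorem Tcan_apply {i : Fin r} (hl : lam i ≠ 0)
    (h : IsUnit (Acan n θa - lam i • (1 : Matrix (Fin n) (Fin n) ℝ)).det) :
    Tcan n r lam x θa θb w i =
      Vlam n (lam i) ⬝ᵥ (x - w i • θb) / (1 - Vlam n (lam i) ⬝ᵥ θa) := by
  rw [eq_div_iff (one_sub_Vlam_dotProduct_ne_zero hl h)]
  conv_rhs => rw [Vlam_eq_smul_e1_vecMul_inv hl h]
  rw [smul_dotProduct, smul_eq_mul, mul_comm, Tcan]

theorem luenbergerMap_apply_eventuallyEq {i : Fin r} (hl : lam i ≠ 0)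
    (h : IsUnit (Acan n θa - lam i • (1 : Matrix (Fin n) (Fin n) ℝ)).det) :
    (luenbergerMap n r lam w · i) =ᶠ[𝓝 (x, θa, θb)] fun p =>
      Vlam n (lam i) ⬝ᵥ (p.1 - w i • p.2.2) / (1 - Vlam n (lam i) ⬝ᵥ p.2.1) := by
  have hθa : ContinuousAt (fun p : ParamState n => p.2.1) (x, θa, θb) := by fun_prop
  filter_upwards [hθa.eventually (eventually_isUnit_det_Acan_sub_smul_one h)] with p hp
  exact Tcan_apply _ _ w hl hp

theorem hasFDerivAt_luenbergerMap_apply {i : Fin r} (hl : lam i ≠ 0)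
    (h : IsUnit (Acan n θa - lam i • (1 : Matrix (Fin n) (Fin n) ℝ)).det) :
    HasFDerivAt (luenbergerMap n r lam w · i)
      ((1 - Vlam n (lam i) ⬝ᵥ θa)⁻¹ • PmatRow n r lam (Tcan n r lam x θa θb w) w i)
      (x, θa, θb) := by
  let V := (dotProductBilin ℝ ℝ (Vlam n (lam i))).toContinuousLinearMap
  let πx := ContinuousLinearMap.fst ℝ (Fin n → ℝ) ((Fin n → ℝ) × (Fin n → ℝ))
  let πθ := ContinuousLinearMap.snd ℝ (Fin n → ℝ) ((Fin n → ℝ) × (Fin n → ℝ))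
  let πa := ContinuousLinearMap.fst ℝ (Fin n → ℝ) (Fin n → ℝ) ∘L πθ
  let πb := ContinuousLinearMap.snd ℝ (Fin n → ℝ) (Fin n → ℝ) ∘L πθ
  have hnum : HasFDerivAt (fun p : ParamState n => Vlam n (lam i) ⬝ᵥ (p.1 - w i • p.2.2))
      (V ∘L (πx - w i • πb)) (x, θa, θb) :=
    (V ∘L (πx - w i • πb)).hasFDerivAt
  have hden : HasFDerivAt (fun p : ParamState n => 1 - Vlam n (lam i) ⬝ᵥ p.2.1)
      (-(V ∘L πa)) (x, θa, θb) :=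
    (V ∘L πa).hasFDerivAt.const_sub 1
  have hquot := hasFDerivAt_fun_div hnum hden (one_sub_Vlam_dotProduct_ne_zero hl h)
  rw [smul_neg, sub_neg_eq_add, ← Tcan_apply _ _ w hl h] at hquot
  have hmap := hquot.congr_of_eventuallyEq (luenbergerMap_apply_eventuallyEq θb x w hl h)
  refine hmap.congr_fderiv (ContinuousLinearMap.ext fun v => ?_)
  exact congrArg _ (Pmat_mulVec_stack3 lam _ w v.1 v.2.1 v.2.2 i).symm

theorem differentiableAt_luenbergerMap (hlam : ∀ i, lam i ≠ 0)
    (hinv : ∀ i, IsUnit (Acan n θa - lam i • (1 : Matrix (Fin n) (Fin n) ℝ)).det) :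
    DifferentiableAt ℝ (luenbergerMap n r lam w) (x, θa, θb) :=
  differentiableAt_pi.2 fun i =>
    (hasFDerivAt_luenbergerMap_apply θb x w (hlam i) (hinv i)).differentiableAt

theorem one_sub_Vlam_mul_fderiv_luenbergerMap (hlam : ∀ i, lam i ≠ 0)
    (hinv : ∀ i, IsUnit (Acan n θa - lam i • (1 : Matrix (Fin n) (Fin n) ℝ)).det)
    (vx vθa vθb : Fin n → ℝ) (i : Fin r) :
    (1 - Vlam n (lam i) ⬝ᵥ θa) *
        fderiv ℝ (luenbergerMap n r lam w) (x, θa, θb) (vx, vθa, vθb) i =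
      (Pmat n r lam (Tcan n r lam x θa θb w) w *ᵥ stack3 n vx vθa vθb) i := by
  have hfderiv := (differentiableAt_luenbergerMap θb x w hlam hinv).hasFDerivAt
  have hcoord := (hasFDerivAt_pi'.1 hfderiv i).unique
    (hasFDerivAt_luenbergerMap_apply θb x w (hlam i) (hinv i))
  refine (congrArg _ (DFunLike.congr_fun hcoord (vx, vθa, vθb))).trans ?_
  exact mul_inv_cancel_left₀ (one_sub_Vlam_dotProduct_ne_zero (hlam i) (hinv i)) _

variable {θb x w}

theorem fderiv_luenbergerMap_eq_zero_of_Pmat_mulVec_eq_zero (hlam : ∀ i, lam i ≠ 0)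
    (hinv : ∀ i, IsUnit (Acan n θa - lam i • (1 : Matrix (Fin n) (Fin n) ℝ)).det)
    {vx vθa vθb : Fin n → ℝ}
    (h : Pmat n r lam (Tcan n r lam x θa θb w) w *ᵥ stack3 n vx vθa vθb = 0) :
    fderiv ℝ (luenbergerMap n r lam w) (x, θa, θb) (vx, vθa, vθb) = 0 := by
  funext i
  have hi := one_sub_Vlam_mul_fderiv_luenbergerMap θb x w hlam hinv vx vθa vθb i
  rw [h, Pi.zero_apply, mul_eq_zero] at hi
  exact hi.resolve_left (one_sub_Vlam_dotProduct_ne_zero (hlam i) (hinv i))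

theorem mul_eNorm_stack3_le_eNorm_fderiv_luenbergerMap (hlam : ∀ i, lam i ≠ 0)
    (hinv : ∀ i, IsUnit (Acan n θa - lam i • (1 : Matrix (Fin n) (Fin n) ℝ)).det) {L : ℝ}
    (hT : ∀ᶠ p in 𝓝 (x, θa, θb), L * eNorm (stack3 n (p.1 - x) (p.2.1 - θa) (p.2.2 - θb)) ≤
      eNorm (luenbergerMap n r lam w p - luenbergerMap n r lam w (x, θa, θb)))
    (vx vθa vθb : Fin n → ℝ) :
    L * eNorm (stack3 n vx vθa vθb) ≤
      eNorm (fderiv ℝ (luenbergerMap n r lam w) (x, θa, θb) (vx, vθa, vθb)) := by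
  let N := (eNormSeminorm (3 * n)).comp (stack3LinearMap n)
  have hN (p : ParamState n) : N p = eNorm (stack3 n p.1 p.2.1 p.2.2) :=
    eNormSeminorm_apply _
  have hcont : Continuous (eNormSeminorm r) :=
    continuous_eNorm.congr fun v => (eNormSeminorm_apply v).symm
  have hfderiv := (differentiableAt_luenbergerMap θb x w hlam hinv).hasFDerivAt
  have hline := hfderiv.hasLineDerivAt (vx, vθa, vθb)
  have hle := seminorm_le_of_hasLineDerivAt (p := N) (c := L) hcont hline <| by
    simpa only [hN, eNormSeminorm_apply, Prod.fst_sub, Prod.snd_sub] using hT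
  simpa only [hN, eNormSeminorm_apply] using hle

theorem rank_Pmat_of_eventually_le (hlam : ∀ i, lam i ≠ 0)
    (hinv : ∀ i, IsUnit (Acan n θa - lam i • (1 : Matrix (Fin n) (Fin n) ℝ)).det)
    {L : ℝ} (hL : 0 < L)
    (hT : ∀ᶠ p in 𝓝 (x, θa, θb), L * eNorm (stack3 n (p.1 - x) (p.2.1 - θa) (p.2.2 - θb)) ≤
      eNorm (luenbergerMap n r lam w p - luenbergerMap n r lam w (x, θa, θb))) :
    (Pmat n r lam (Tcan n r lam x θa θb w) w).rank = 3 * n := by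
  have hker : (Pmat n r lam (Tcan n r lam x θa θb w) w).mulVecLin.ker = ⊥ := by
    refine Matrix.ker_mulVecLin_eq_bot_iff.2 fun u hu => ?_
    obtain ⟨vx, vθa, vθb, rfl⟩ := exists_eq_stack3 u
    have hle := mul_eNorm_stack3_le_eNorm_fderiv_luenbergerMap hlam hinv hT vx vθa vθb
    rw [fderiv_luenbergerMap_eq_zero_of_Pmat_mulVec_eq_zero hlam hinv hu,
      eNorm_eq_zero.2 rfl] at hle
    exact eNorm_eq_zero.1 ((nonpos_of_mul_nonpos_right hle hL).antisymm (Real.sqrt_nonneg _))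
  rw [Matrix.rank, LinearMap.finrank_range_of_inj (LinearMap.ker_eq_bot.1 hker),
    Module.finrank_fin_fun]

end LuenbergerMap

/-- Step 2 of the proof of Proposition 5, Jacobian identity for `T`:
`Diag{1 − V_{λᵢ}ᵀθ_a} · ∂T/∂(x,θ) = P(T(x,θ,w), w)` with nonzero diagonal entries ;
in particular, under a local uniform injectivity bound, `P(T(x,θ,w), w)` has full
column rank `3n`. -/
theorem jacobian_identity_canonical
    (n r : ℕ) (θa θb : Fin n → ℝ) (x : Fin n → ℝ) (w : Fin r → ℝ)
    (lam : Fin r → ℝ) (hlam : ∀ i, lam i ≠ 0)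
    (hinv : ∀ i : Fin r,
      IsUnit (Acan n θa - lam i • (1 : Matrix (Fin n) (Fin n) ℝ)).det) :
    (∀ i : Fin r, 1 - Vlam n (lam i) ⬝ᵥ θa ≠ 0) ∧
    (∀ vx vθa vθb : Fin n → ℝ,
      (fun i : Fin r => (1 - Vlam n (lam i) ⬝ᵥ θa)
          * fderiv ℝ (fun p : (Fin n → ℝ) × (Fin n → ℝ) × (Fin n → ℝ) =>
              Tcan n r lam p.1 p.2.1 p.2.2 w) (x, θa, θb) (vx, vθa, vθb) i)
        = Pmat n r lam (Tcan n r lam x θa θb w) w *ᵥ stack3 n vx vθa vθb) ∧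
    (∀ LT : ℝ, 0 < LT →
      ∀ U : Set ((Fin n → ℝ) × (Fin n → ℝ) × (Fin n → ℝ)),
        U ∈ nhds (x, θa, θb) →
        (∀ p ∈ U, ∀ p' ∈ U,
          eNorm (Tcan n r lam p.1 p.2.1 p.2.2 w - Tcan n r lam p'.1 p'.2.1 p'.2.2 w)
            ≥ LT * eNorm (stack3 n (p.1 - p'.1) (p.2.1 - p'.2.1) (p.2.2 - p'.2.2))) →
        (Pmat n r lam (Tcan n r lam x θa θb w) w).rank = 3 * n) := by
  refine ⟨fun i => one_sub_Vlam_dotProduct_ne_zero (hlam i) (hinv i),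
    fun vx vθa vθb => funext (one_sub_Vlam_mul_fderiv_luenbergerMap θb x w hlam hinv vx vθa vθb),
    ?_⟩
  intro LT hLT U hU hT
  refine rank_Pmat_of_eventually_le hlam hinv hLT ?_
  filter_upwards [hU] with p hp
  exact hT p hp (x, θa, θb) (mem_of_mem_nhds hU)
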